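/- arXiv:1302.5789 — 2 statements merged into one kernel-verified Lean document; each statement's English description precedes it below -/
import Mathlib

section
/- Let f be a negative definite kernel on a countable set Γ. Then √f is a measure definite kernel: there is a measure space (Ω,𝓑,μ) and measurable sets S_x with √(f(x,y)) = μ(S_x △ S_y) for all x,y ∈ Γ. -/
open MeasureTheory
open scoped symmDiff

/-!
A negative definite kernel is a squared distance in a real inner product space (Schoenberg), and
an orthonormal basis indexed by `ι` sent to independent standard Gaussian variables `(ξ i)` turns
that space into a space of centred Gaussian variables whose variance is the squared norm. The first
absolute moment of such a variable is `√(2 / π)` times its standard deviation, so up to this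
constant the space embeds isometrically into `L¹`. Finally, the `L¹` distance of two functions is
the measure of the region enclosed between their graphs.
-/

open ProbabilityTheory UniformSpace
open scoped ENNReal NNReal ComplexOrder

universe u v w

/-- A real kernel `f` on `Γ` is negative definite if it vanishes on the diagonal, is symmetric and
has nonpositive quadratic form on coefficients of sum zero. These are the squared Hilbert space
distances. The points `x i` of the quadratic form may repeat. -/
structure IsNegativeDefiniteKernel {Γ : Type*} (f : Γ → Γ → ℝ) : Prop where
  diag_eq_zero : ∀ x, f x x = 0
  symm : ∀ x y, f x y = f y x
  sum_nonpos : ∀ (n : ℕ) (x : Fin n → Γ) (c : Fin n → ℝ), (∑ i, c i = 0) →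
    ∑ i, ∑ j, c i * c j * f (x i) (x j) ≤ 0

/-- A kernel `d` on `Γ` is measure definite if it is the measure of the symmetric difference of
measurable sets indexed by `Γ`, that is, an `L¹` distance of indicators. Values are taken in
`ℝ≥0∞`, the codomain of measures. -/
def IsMeasureDefiniteKernel {Γ : Type u} (d : Γ → Γ → ℝ≥0∞) : Prop :=
  ∃ (Ω : Type w) (_ : MeasurableSpace Ω) (μ : Measure Ω) (S : Γ → Set Ω),
    (∀ x, MeasurableSet (S x)) ∧ ∀ x y, μ (S x ∆ S y) = d x y

theorem IsMeasureDefiniteKernel.comp {Γ : Type u} {Γ' : Type v} {d : Γ → Γ → ℝ≥0∞}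
    (hd : IsMeasureDefiniteKernel.{u, w} d) (g : Γ' → Γ) :
    IsMeasureDefiniteKernel.{v, w} fun x y ↦ d (g x) (g y) := by
  obtain ⟨Ω, _, μ, S, hS, hμ⟩ := hd
  exact ⟨Ω, _, μ, S ∘ g, fun x ↦ hS (g x), fun x y ↦ hμ (g x) (g y)⟩

theorem exists_inner_eq_of_posSemidef {𝕜 : Type v} [RCLike 𝕜] {X : Type u} {K : Matrix X X 𝕜}
    (hK : K.PosSemidef) :
    ∃ (E : Type (max u v)) (_ : NormedAddCommGroup E) (_ : InnerProductSpace 𝕜 E) (v : X → E),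
      ∀ x y, inner 𝕜 (v x) (v y) = K x y := by
  -- `RKHS.OfKernel` takes operator-valued kernels; `A x y` is multiplication by `K x y`.
  let A : Matrix X X (𝕜 →L[𝕜] 𝕜) := K.map fun a ↦ a • 1
  have hA : A.PosSemidef := by
    refine ((RKHS.posSemidef_tfae (K := A)).out 0 2 rfl rfl).mpr ⟨?_, fun c ↦ ?_⟩
    · ext x y
      simp [A, ← hK.1.apply x y]
    · convert! (RCLike.nonneg_iff.mp (hK.2 c)).1 using 2
      refine Finsupp.sum_congr fun x _ ↦ Finsupp.sum_congr fun y _ ↦ ?_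
      simp only [A, Matrix.map_apply, smul_apply, one_apply_eq_self, smul_eq_mul,
        RCLike.inner_apply, map_mul, RCLike.star_def, ← hK.1.apply x y]
      ring
  have : Fact A.PosSemidef := ⟨hA⟩
  refine ⟨RKHS.OfKernel A, inferInstance, inferInstance,
    fun x ↦ RKHS.kerFun (RKHS.OfKernel A) x (1 : 𝕜), fun x y ↦ ?_⟩
  rw [← RKHS.kernel_inner, RKHS.OfKernel.kernel_ofKernel]
  simpa [A] using hK.1.apply x y

/-- The Gromov product of `x` and `y` based at `o`, for a kernel `f` playing the role of the
(squared) distance. -/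
noncomputable def gromovProduct {Γ : Type*} (f : Γ → Γ → ℝ) (o x y : Γ) : ℝ :=
  (f x o + f y o - f x y) / 2

namespace IsNegativeDefiniteKernel

variable {Γ : Type u} {f : Γ → Γ → ℝ}

theorem comp {Γ' : Type*} (hf : IsNegativeDefiniteKernel f) (g : Γ' → Γ) :
    IsNegativeDefiniteKernel fun x y ↦ f (g x) (g y) where
  diag_eq_zero x := hf.diag_eq_zero (g x)
  symm x y := hf.symm (g x) (g y)
  sum_nonpos n x := hf.sum_nonpos n (g ∘ x)

theorem sum_nonpos_of_fintype (hf : IsNegativeDefiniteKernel f) {ι : Type*} [Fintype ι]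
    (x : ι → Γ) (c : ι → ℝ) (hc : ∑ i, c i = 0) :
    ∑ i, ∑ j, c i * c j * f (x i) (x j) ≤ 0 := by
  let e := Fintype.equivFin ι
  simpa [← e.symm.sum_comp] using
    hf.sum_nonpos _ (x ∘ e.symm) (c ∘ e.symm) (by simpa [e.symm.sum_comp] using hc)

/-- Adding the base point `o` with coefficient `-∑ i, c i` makes the coefficients sum to zero. -/
theorem sum_gromovProduct_nonneg (hf : IsNegativeDefiniteKernel f) (o : Γ) {ι : Type*} [Fintype ι]
    (x : ι → Γ) (c : ι → ℝ) :
    0 ≤ ∑ i, ∑ j, c i * gromovProduct f o (x i) (x j) * c j := by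
  set s := ∑ i, c i with hs
  set t := ∑ i, c i * f (x i) o with ht
  set q := ∑ i, ∑ j, c i * c j * f (x i) (x j) with hq
  have hextended : q - 2 * (s * t) ≤ 0 := by
    have h := hf.sum_nonpos_of_fintype (fun i : Option ι ↦ i.elim o x)
      (fun i ↦ i.elim (-s) c) (by simp [Fintype.sum_option, hs])
    simp only [Fintype.sum_option, Option.elim_none, Option.elim_some, hf.diag_eq_zero, hf.symm o,
      Finset.sum_add_distrib, mul_right_comm _ (-s), ← Finset.sum_mul, mul_assoc (-s),
      ← Finset.mul_sum, ← ht, ← hq] at h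
    linarith
  have hgromov : ∑ i, ∑ j, c i * gromovProduct f o (x i) (x j) * c j = s * t - q / 2 := by
    have hst : s * t = ∑ i, ∑ j, c i * c j * f (x j) o := by
      simp only [hs, ht, Finset.sum_mul_sum, mul_assoc]
    have hts : t * s = ∑ i, ∑ j, c i * c j * f (x i) o := by
      simp only [hs, ht, Finset.sum_mul_sum, mul_right_comm]
    calc
      _ = (t * s + s * t - q) / 2 := by
        rw [hst, hts, hq]
        simp only [← Finset.sum_add_distrib, ← Finset.sum_sub_distrib, Finset.sum_div]
        refine Finset.sum_congr rfl fun i _ ↦ Finset.sum_congr rfl fun j _ ↦ ?_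
        rw [gromovProduct]
        ring
      _ = s * t - q / 2 := by ring
  linarith

theorem posSemidef_gromovProduct (hf : IsNegativeDefiniteKernel f) (o : Γ) :
    (Matrix.of (gromovProduct f o)).PosSemidef := by
  refine ⟨?_, fun c ↦ ?_⟩
  · ext x y
    simp [gromovProduct, hf.symm x y, add_comm]
  · simpa [Finsupp.sum, ← Finset.sum_coe_sort c.support] using
      hf.sum_gromovProduct_nonneg o ((↑) : c.support → Γ) (fun x ↦ c x)

theorem exists_norm_sub_sq_eq (hf : IsNegativeDefiniteKernel f) :
    ∃ (E : Type u) (_ : NormedAddCommGroup E) (_ : InnerProductSpace ℝ E) (v : Γ → E),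
      ∀ x y, ‖v x - v y‖ ^ 2 = f x y := by
  rcases isEmpty_or_nonempty Γ with _ | ⟨⟨o⟩⟩
  · exact ⟨EuclideanSpace ℝ PEmpty.{u + 1}, inferInstance, inferInstance, isEmptyElim,
      isEmptyElim⟩
  obtain ⟨E, _, _, v, hv⟩ := exists_inner_eq_of_posSemidef (hf.posSemidef_gromovProduct o)
  refine ⟨E, inferInstance, inferInstance, v, fun x y ↦ ?_⟩
  rw [norm_sub_sq_real, ← real_inner_self_eq_norm_sq, ← real_inner_self_eq_norm_sq]
  simp only [hv, Matrix.of_apply, gromovProduct, hf.diag_eq_zero]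
  ring

end IsNegativeDefiniteKernel

theorem exists_linearIsometry_of_norm_eq {𝕜 M E F : Type*} [NontriviallyNormedField 𝕜]
    [AddCommGroup M] [Module 𝕜 M] [SeminormedAddCommGroup E] [NormedSpace 𝕜 E]
    [NormedAddCommGroup F] [NormedSpace 𝕜 F] [CompleteSpace F] {f : M →ₗ[𝕜] F} {e : M →ₗ[𝕜] E}
    (he : DenseRange e) (h : ∀ x, ‖f x‖ = ‖e x‖) :
    ∃ T : E →ₗᵢ[𝕜] F, ∀ x, T (e x) = f x := by
  have hext (x : M) : f.extendOfNorm e (e x) = f x :=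
    LinearMap.extendOfNorm_eq he ⟨1, fun x ↦ by simp [h]⟩ x
  refine ⟨⟨f.extendOfNorm e, fun y ↦ ?_⟩, hext⟩
  refine he.induction_on (p := fun y ↦ ‖f.extendOfNorm e y‖ = ‖y‖) y
    (isClosed_eq (by fun_prop) (by fun_prop)) fun x ↦ ?_
  rw [hext, h]

theorem norm_linearCombination_of_orthonormal {𝕜 E ι : Type*} [RCLike 𝕜] [NormedAddCommGroup E]
    [InnerProductSpace 𝕜 E] {e : ι → E} (he : Orthonormal 𝕜 e) (c : ι →₀ 𝕜) :
    ‖Finsupp.linearCombination 𝕜 e c‖ = √(∑ i ∈ c.support, ‖c i‖ ^ 2) := by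
  rw [norm_eq_sqrt_re_inner (𝕜 := 𝕜), he.inner_finsupp_eq_sum_left]
  simp [Finsupp.sum, RCLike.conj_mul]

theorem integral_Ioi_mul_exp_neg_mul_sq {b : ℝ} (hb : 0 < b) :
    ∫ x in Set.Ioi 0, x * Real.exp (-b * x ^ 2) = (2 * b)⁻¹ := by
  exact_mod_cast integral_mul_cexp_neg_mul_sq (b := b) (by simpa using hb)

theorem integral_abs_gaussianReal (v : ℝ≥0) :
    ∫ x, |x| ∂gaussianReal 0 v = √(2 / Real.pi) * √v := by
  rcases eq_or_ne v 0 with rfl | hv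
  · simp
  have hexp (x : ℝ) : Real.exp (-x ^ 2 / (2 * v)) = Real.exp (-(2 * v : ℝ)⁻¹ * x ^ 2) := by
    congr 1
    field_simp
  have habs : ∫ x, Real.exp (-x ^ 2 / (2 * v)) * |x| = 2 * v := by
    have h := integral_comp_abs (f := fun x ↦ x * Real.exp (-(2 * v : ℝ)⁻¹ * x ^ 2))
    rw [integral_Ioi_mul_exp_neg_mul_sq (by positivity)] at h
    simp_rw [hexp]
    simpa [mul_comm] using h
  simp_rw [integral_gaussianReal_eq_integral_smul hv, gaussianPDFReal, smul_eq_mul, sub_zero,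
    mul_assoc, integral_const_mul, habs]
  rw [Real.sqrt_mul zero_le_two, Real.sqrt_mul Real.pi_nonneg, Real.sqrt_div zero_le_two]
  have : √(v : ℝ) ≠ 0 := by positivity
  have := Real.pi_pos
  field_simp
  rw [Real.sq_sqrt (by positivity), Real.sq_sqrt (by positivity)]

section GaussianSums

variable {Ω ι : Type*} [MeasurableSpace Ω] {P : Measure Ω}

theorem hasLaw_sum_gaussianReal {X : ι → Ω → ℝ} {m : ι → ℝ} {v : ι → ℝ≥0}
    (hX : ∀ i, HasLaw (X i) (gaussianReal (m i) (v i)) P) (hindep : iIndepFun X P)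
    (s : Finset ι) :
    HasLaw (∑ i ∈ s, X i) (gaussianReal (∑ i ∈ s, m i) (∑ i ∈ s, v i)) P := by
  classical
  have := hindep.isProbabilityMeasure
  induction s using Finset.induction_on with
  | empty => simpa using! hasLaw_dirac_of_ae_eq (P := P) (X := fun _ ↦ (0 : ℝ)) ae_eq_rfl
  | insert i s hi ih =>
    have hindep' : IndepFun (X i) (∑ j ∈ s, X j) P :=
      (hindep.indepFun_finsetSum_of_notMem₀ (fun i ↦ (hX i).aemeasurable) hi).symm
    simp only [Finset.sum_insert hi]
    exact ⟨(hX i).aemeasurable.add ih.aemeasurable,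
      gaussianReal_add_gaussianReal_of_indepFun hindep' (hX i).map_eq ih.map_eq⟩

theorem hasLaw_sum_smul_gaussianReal {X : ι → Ω → ℝ} {m : ι → ℝ} {v : ι → ℝ≥0}
    (hX : ∀ i, HasLaw (X i) (gaussianReal (m i) (v i)) P) (hindep : iIndepFun X P)
    (s : Finset ι) (c : ι → ℝ) :
    HasLaw (∑ i ∈ s, c i • X i)
      (gaussianReal (∑ i ∈ s, c i * m i) (∑ i ∈ s, ‖c i‖₊ ^ 2 * v i)) P := by
  have hsum := hasLaw_sum_gaussianReal (fun i ↦ gaussianReal_const_mul (hX i) (c i))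
    (hindep.comp (fun i x ↦ c i * x) fun i ↦ by fun_prop) s
  convert! hsum using 5
  ext
  simp

theorem linearCombination_toL1_ae_eq {𝕜 E : Type*} [NormedRing 𝕜] [NormedAddCommGroup E]
    [Module 𝕜 E] [IsBoundedSMul 𝕜 E] {X : ι → Ω → E} (hX : ∀ i, Integrable (X i) P)
    (c : ι →₀ 𝕜) :
    Finsupp.linearCombination 𝕜 (fun i ↦ (hX i).toL1 (X i)) c =ᵐ[P]
      ∑ i ∈ c.support, c i • X i := by
  rw [Finsupp.linearCombination_apply, Finsupp.sum]
  refine (Lp.coeFn_finsetSum _ _).trans (eventuallyEq_sum fun i _ ↦ ?_)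
  exact (Lp.coeFn_smul _ _).trans ((hX i).coeFn_toL1.const_smul (c i))

theorem norm_linearCombination_toL1_gaussianReal {ξ : ι → Ω → ℝ}
    (hξ : ∀ i, HasLaw (ξ i) (gaussianReal 0 1) P) (hindep : iIndepFun ξ P)
    (hint : ∀ i, Integrable (ξ i) P) (c : ι →₀ ℝ) :
    ‖Finsupp.linearCombination ℝ (fun i ↦ (hint i).toL1 (ξ i)) c‖ =
      √(2 / Real.pi) * √(∑ i ∈ c.support, ‖c i‖ ^ 2) := by
  have hlaw : HasLaw (∑ i ∈ c.support, c i • ξ i)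
      (gaussianReal 0 (∑ i ∈ c.support, ‖c i‖₊ ^ 2)) P := by
    simpa using hasLaw_sum_smul_gaussianReal hξ hindep c.support c
  calc
    _ = ∫ ω, |(∑ i ∈ c.support, c i • ξ i) ω| ∂P := by
      rw [L1.norm_eq_integral_norm]
      refine integral_congr_ae ?_
      filter_upwards [linearCombination_toL1_ae_eq hint c] with ω hω
      rw [hω, Real.norm_eq_abs]
    _ = ∫ x, |x| ∂gaussianReal 0 (∑ i ∈ c.support, ‖c i‖₊ ^ 2) :=
      hlaw.integral_comp (f := fun x ↦ |x|) (by fun_prop)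
    _ = _ := by
      rw [integral_abs_gaussianReal]
      push_cast
      rfl

end GaussianSums

theorem exists_linearIsometry_L1 (E : Type u) [NormedAddCommGroup E] [InnerProductSpace ℝ E] :
    ∃ (Ω : Type u) (_ : MeasurableSpace Ω) (P : Measure Ω),
      IsProbabilityMeasure P ∧ Nonempty (E →ₗᵢ[ℝ] Lp ℝ 1 P) := by
  obtain ⟨ι, e, -⟩ := exists_hilbertBasis ℝ (Completion E)
  obtain ⟨Ω, _, P, ξ, -, hξ, hindep, hP⟩ := exists_iid ι (gaussianReal 0 1)
  have hint (i : ι) : Integrable (ξ i) P := (hξ i).hasGaussianLaw.integrable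
  let G := √(Real.pi / 2) • Finsupp.linearCombination ℝ fun i ↦ (hint i).toL1 (ξ i)
  have hconst : √(Real.pi / 2) * √(2 / Real.pi) = 1 := by
    rw [← inv_div 2 Real.pi, Real.sqrt_inv, inv_mul_cancel₀ (by positivity)]
  have hG (c : ι →₀ ℝ) : ‖G c‖ = ‖Finsupp.linearCombination ℝ e c‖ := by
    rw [LinearMap.smul_apply, norm_smul, norm_linearCombination_toL1_gaussianReal hξ hindep,
      norm_linearCombination_of_orthonormal e.orthonormal, ← mul_assoc,
      Real.norm_of_nonneg (Real.sqrt_nonneg _), hconst, one_mul]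
  have hdense : DenseRange (Finsupp.linearCombination ℝ e) := by
    rw [DenseRange, ← LinearMap.coe_range, Finsupp.range_linearCombination]
    exact Submodule.dense_iff_topologicalClosure_eq_top.mpr e.dense_span
  obtain ⟨T, -⟩ := exists_linearIsometry_of_norm_eq hdense hG
  exact ⟨Ω, _, P, hP, ⟨T.comp Completion.toComplₗᵢ⟩⟩

theorem volume_Iio_symmDiff_Iio (a b : ℝ) : volume (Set.Iio a ∆ Set.Iio b) = ‖a - b‖ₑ := by
  have hIco : Set.Iio a ∆ Set.Iio b = Set.Ico (min a b) (max a b) := by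
    ext t
    simp only [Set.mem_symmDiff, Set.mem_Iio, Set.mem_Ico]
    grind
  rw [hIco, Real.volume_Ico, max_sub_min_eq_abs', Real.enorm_eq_ofReal_abs]

theorem prod_volume_subgraph_symmDiff {Ω : Type*} [MeasurableSpace Ω] (P : Measure Ω) [SFinite P]
    {X Y : Ω → ℝ} (hX : Measurable X) (hY : Measurable Y) :
    P.prod volume ({p : Ω × ℝ | p.2 < X p.1} ∆ {p : Ω × ℝ | p.2 < Y p.1}) =
      ∫⁻ ω, ‖X ω - Y ω‖ₑ ∂P := by
  have hsubgraph {Z : Ω → ℝ} (hZ : Measurable Z) : MeasurableSet {p : Ω × ℝ | p.2 < Z p.1} :=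
    measurableSet_lt measurable_snd (hZ.comp measurable_fst)
  rw [Measure.prod_apply ((hsubgraph hX).symmDiff (hsubgraph hY))]
  exact lintegral_congr fun ω ↦ volume_Iio_symmDiff_Iio (X ω) (Y ω)

theorem isMeasureDefiniteKernel_edist_L1 {Γ : Type u} {Ω : Type w} [MeasurableSpace Ω]
    (P : Measure Ω) [SFinite P] (X : Γ → Lp ℝ 1 P) :
    IsMeasureDefiniteKernel.{u, w} fun x y ↦ edist (X x) (X y) := by
  have hX (x : Γ) : Measurable (X x) := (Lp.stronglyMeasurable (X x)).measurable
  refine ⟨Ω × ℝ, inferInstance, P.prod volume, fun x ↦ {p | p.2 < X x p.1},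
    fun x ↦ measurableSet_lt measurable_snd ((hX x).comp measurable_fst), fun x y ↦ ?_⟩
  beta_reduce
  rw [prod_volume_subgraph_symmDiff P (hX x) (hX y), ← L1.ofReal_norm_sub_eq_lintegral, edist_dist,
    dist_eq_norm]

theorem IsNegativeDefiniteKernel.isMeasureDefiniteKernel_sqrt {Γ : Type u} {f : Γ → Γ → ℝ}
    (hf : IsNegativeDefiniteKernel f) :
    IsMeasureDefiniteKernel.{u, u} fun x y ↦ ENNReal.ofReal √(f x y) := by
  obtain ⟨E, _, _, v, hv⟩ := hf.exists_norm_sub_sq_eq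
  obtain ⟨Ω, _, P, _, ⟨J⟩⟩ := exists_linearIsometry_L1 E
  have hedist (x y : Γ) : edist (J (v x)) (J (v y)) = ENNReal.ofReal √(f x y) := by
    rw [J.isometry.edist_eq, edist_dist, dist_eq_norm, ← hv, Real.sqrt_sq (norm_nonneg _)]
  simpa only [hedist] using isMeasureDefiniteKernel_edist_L1 P fun x ↦ J (v x)

theorem sqrt_of_negative_definite_is_measure_definite_general {Γ : Type u} [Small.{w} Γ]
    {f : Γ → Γ → ℝ} (hf : IsNegativeDefiniteKernel f) :
    IsMeasureDefiniteKernel.{u, w} fun x y ↦ ENNReal.ofReal √(f x y) := by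
  simpa using (hf.comp (equivShrink Γ).symm).isMeasureDefiniteKernel_sqrt.comp (equivShrink Γ)

/-- If `f` is a negative definite kernel on a countable set, then `√f`
is measure definite. -/
theorem sqrt_of_negative_definite_is_measure_definite {Γ : Type*} [Countable Γ]
    (f : Γ → Γ → ℝ)
    (hf0 : ∀ x y, 0 ≤ f x y)
    (hdiag : ∀ x, f x x = 0)
    (hsymm : ∀ x y, f x y = f y x)
    (hneg : ∀ (n : ℕ) (x : Fin n → Γ) (c : Fin n → ℝ), (∑ i, c i = 0) →
      ∑ i, ∑ j, c i * c j * f (x i) (x j) ≤ 0) :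
    ∃ (Ω : Type) (_ : MeasurableSpace Ω) (μ : Measure Ω) (S : Γ → Set Ω),
      (∀ x, MeasurableSet (S x)) ∧
      ∀ x y, μ (S x ∆ S y) = ENNReal.ofReal (Real.sqrt (f x y)) :=
  sqrt_of_negative_definite_is_measure_definite_general ⟨hdiag, hsymm, hneg⟩
end

section
/- With Ω the space of half-spaces of a finite-dimensional real Hilbert space ℋ with its invariant measure μ, the quantity μ{M ∈ Ω : v_{x_1},…,v_{x_m} ∈ M and v_{y_1},…,v_{y_n} ∉ M} depends only on the configuration of the points (v_{x_1},…,v_{x_m},v_{y_1},…,v_{y_n}), i.e., only on the pairwise distances among them; in particular it is independent of the ambient dimension and is preserved under affine isometries. -/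
open MeasureTheory
open scoped RealInnerProductSpace ENNReal

/-- The space of (closed affine) half-spaces of a real inner product space. -/
def HalfSpaces (H : Type*) [NormedAddCommGroup H] [InnerProductSpace ℝ H] : Type _ :=
  {M : Set H // ∃ (ξ : H) (t : ℝ), ‖ξ‖ = 1 ∧ M = {u | t ≤ ⟪u, ξ⟫}}

/-- `μ` is the natural measure on the space of half-spaces: the σ-algebra is generated by
the sets `S_v = {M : v ∈ M}`, `μ` is invariant under rigid motions, and it is normalized
so that `μ {M : v ∈ M, w ∉ M} = ‖v - w‖`. -/
def IsHalfSpaceMeasure (H : Type*) [NormedAddCommGroup H] [InnerProductSpace ℝ H]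
    [m : MeasurableSpace (HalfSpaces H)] (μ : Measure (HalfSpaces H)) : Prop :=
  m = MeasurableSpace.generateFrom {A | ∃ v : H, A = {M : HalfSpaces H | v ∈ M.1}} ∧
  (∀ (φ : H ≃ᵢ H) (A : Set (HalfSpaces H)), MeasurableSet A →
    μ {M : HalfSpaces H | ⇑φ '' M.1 ∈ Subtype.val '' A} = μ A) ∧
  (∀ v w : H, μ {M : HalfSpaces H | v ∈ M.1 ∧ w ∉ M.1} = ENNReal.ofReal ‖v - w‖)

/-!
A half-space `{u | t ≤ ⟪u, ξ⟫}` is encoded by its unit normal `ξ` and its offset `t`. Translations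
act on the offset by `t ↦ t + ⟪x, ξ⟫`, so translation invariance forces the measure to be `σ × dt`
for a finite measure `σ` on the sphere, and `μ {M : a_i ∈ M, b_j ∉ M}` is the `σ`-integral of the
length of the gap between the `⟪b_j, ξ⟫` and the `⟪a_i, ξ⟫`. This length is positively homogeneous
in `ξ` and `σ` is rotation invariant, so up to a constant its integral is the mean of the gap length
at a standard Gaussian vector; the normalization makes the constant dimension free. Finally, the
Gaussian mean only sees the Gram matrix of the points relative to one of them, that is, their
mutual distances.
-/

open ProbabilityTheory

section RotationInvariance

variable {H : Type*} [NormedAddCommGroup H] [InnerProductSpace ℝ H] [MeasurableSpace H]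

/-- Invariance of a measure under all linear isometries of the space. -/
def IsRotationInvariant (ν : Measure H) : Prop :=
  ∀ R : H ≃ₗᵢ[ℝ] H, ν.map R = ν

variable [BorelSpace H] {ν σ : Measure H}

lemma IsRotationInvariant.charFun_eq_of_norm_eq (hν : IsRotationInvariant ν) {x y : H}
    (hxy : ‖x‖ = ‖y‖) : charFun ν x = charFun ν y := by
  let R : H ≃ₗᵢ[ℝ] H := (ℝ ∙ (x - y))ᗮ.reflection
  have hRx : R x = y := Submodule.reflection_sub hxy
  calc charFun ν x = charFun (ν.map R) y := by
        rw [charFun_apply, charFun_apply,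
          integral_map R.continuous.measurable.aemeasurable
            (Measurable.aestronglyMeasurable (by fun_prop))]
        simp_rw [← hRx, R.inner_map_map]
    _ = charFun ν y := by rw [hν R]

variable [CompleteSpace H] [SecondCountableTopology H] [IsFiniteMeasure ν] [IsFiniteMeasure σ]

/- Polar decomposition. On the level of characteristic functions it only says that `‖x‖ • y` and
`‖y‖ • x` have the same norm, which allows one to exchange `ν` and `σ`. -/
lemma IsRotationInvariant.map_norm_smul_prod (hν : IsRotationInvariant ν)
    (hσ : IsRotationInvariant σ) (hσ_norm : ∀ᵐ ξ ∂σ, ‖ξ‖ = 1) :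
    (ν.prod σ).map (fun p => ‖p.1‖ • p.2) = σ Set.univ • ν := by
  have : IsFiniteMeasure (σ Set.univ • ν) := ν.smul_finite (measure_ne_top σ _)
  have integrable_exp (f : H × H → ℝ) (hf : Continuous f) :
      Integrable (fun p => Complex.exp (f p * Complex.I)) (ν.prod σ) :=
    .of_bound (Measurable.aestronglyMeasurable (by fun_prop)) 1
      (.of_forall fun p => by rw [Complex.norm_exp_ofReal_mul_I])
  refine Measure.ext_of_charFun (funext fun y => ?_)
  calc charFun ((ν.prod σ).map fun p => ‖p.1‖ • p.2) y
      = ∫ x, charFun σ (‖x‖ • y) ∂ν := by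
        rw [charFun_apply, integral_map (by fun_prop)
          (Measurable.aestronglyMeasurable (by fun_prop)),
          integral_prod _ (integrable_exp _ (by fun_prop))]
        simp_rw [charFun_apply, real_inner_smul_left, real_inner_smul_right]
    _ = ∫ x, charFun σ (‖y‖ • x) ∂ν :=
        integral_congr_ae (.of_forall fun x =>
          hσ.charFun_eq_of_norm_eq (by simp [norm_smul, mul_comm]))
    _ = ∫ ξ, charFun ν (‖y‖ • ξ) ∂σ := by
        simp_rw [charFun_apply, real_inner_smul_right]
        rw [integral_integral_swap (integrable_exp (fun p => ‖y‖ * ⟪p.2, p.1⟫) (by fun_prop))]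
        simp_rw [real_inner_comm]
    _ = ∫ _, charFun ν y ∂σ := by
        refine integral_congr_ae ?_
        filter_upwards [hσ_norm] with ξ hξ
        exact hν.charFun_eq_of_norm_eq (by simp [norm_smul, hξ])
    _ = charFun (σ Set.univ • ν) y := by
        simp [charFun_apply, integral_smul_measure, Measure.real]

lemma IsRotationInvariant.measure_univ_mul_lintegral (hν : IsRotationInvariant ν)
    (hσ : IsRotationInvariant σ) (hσ_norm : ∀ᵐ ξ ∂σ, ‖ξ‖ = 1) {f : H → ℝ≥0∞} (hf : Measurable f)
    (hf_hom : ∀ (r : ℝ) (x : H), 0 ≤ r → f (r • x) = ENNReal.ofReal r * f x) :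
    σ Set.univ * ∫⁻ x, f x ∂ν = (∫⁻ x, ENNReal.ofReal ‖x‖ ∂ν) * ∫⁻ ξ, f ξ ∂σ := by
  rw [← smul_eq_mul, ← lintegral_smul_measure, ← hν.map_norm_smul_prod hσ hσ_norm,
    lintegral_map hf (by fun_prop)]
  simp_rw [fun p : H × H => hf_hom ‖p.1‖ p.2 (norm_nonneg _)]
  exact lintegral_prod_mul measurable_norm.ennreal_ofReal.aemeasurable hf.aemeasurable

end RotationInvariance

section Gaussian

variable {H : Type*} [NormedAddCommGroup H] [InnerProductSpace ℝ H]
  {H' : Type*} [NormedAddCommGroup H'] [InnerProductSpace ℝ H']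
  {ι : Type*} {u : ι → H} {u' : ι → H'}

lemma norm_sum_smul_eq_of_inner_eq (h : ∀ i j, ⟪u i, u j⟫ = ⟪u' i, u' j⟫) (s : Finset ι)
    (c : ι → ℝ) : ‖∑ i ∈ s, c i • u i‖ = ‖∑ i ∈ s, c i • u' i‖ := by
  rw [← sq_eq_sq₀ (norm_nonneg _) (norm_nonneg _), ← real_inner_self_eq_norm_sq,
    ← real_inner_self_eq_norm_sq]
  simp_rw [sum_inner, inner_sum, real_inner_smul_left, real_inner_smul_right, h]

lemma inner_sub_sub_eq_of_norm_sub_eq (h : ∀ i j, ‖u i - u j‖ = ‖u' i - u' j‖) (i j k : ι) :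
    ⟪u i - u k, u j - u k⟫ = ⟪u' i - u' k, u' j - u' k⟫ := by
  simp only [real_inner_eq_norm_mul_self_add_norm_mul_self_sub_norm_sub_mul_self_div_two,
    sub_sub_sub_cancel_right, h]

variable [FiniteDimensional ℝ H] [MeasurableSpace H] [BorelSpace H]
  [FiniteDimensional ℝ H'] [MeasurableSpace H'] [BorelSpace H']

lemma isRotationInvariant_stdGaussian : IsRotationInvariant (stdGaussian H) :=
  fun R => stdGaussian_map R

lemma charFunDual_map_inner_stdGaussian [Fintype ι] [DecidableEq ι] (u : ι → H)
    (L : StrongDual ℝ (ι → ℝ)) :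
    charFunDual ((stdGaussian H).map fun x i => ⟪u i, x⟫) L
      = charFun (stdGaussian H) (∑ i, L (Pi.single i 1) • u i) := by
  rw [charFunDual_apply, charFun_apply, integral_map (by fun_prop)
    (Measurable.aestronglyMeasurable (by fun_prop))]
  refine integral_congr_ae (.of_forall fun x => ?_)
  have hL : L (fun i => ⟪u i, x⟫) = ⟪x, ∑ i, L (Pi.single i 1) • u i⟫ := by
    conv_lhs => rw [pi_eq_sum_univ' (fun i => ⟪u i, x⟫)]
    simp [inner_sum, real_inner_smul_right, real_inner_comm, mul_comm]
  simp only [hL]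

lemma map_inner_stdGaussian_eq_of_inner_eq (h : ∀ i j, ⟪u i, u j⟫ = ⟪u' i, u' j⟫) :
    (stdGaussian H).map (fun x i => ⟪u i, x⟫) = (stdGaussian H').map fun x i => ⟪u' i, x⟫ := by
  classical
  have finite_marginal (I : Finset ι) :
      (stdGaussian H).map (fun x => I.restrict fun i => ⟪u i, x⟫)
        = (stdGaussian H').map (fun x => I.restrict fun i => ⟪u' i, x⟫) := by
    refine Measure.ext_of_charFunDual (funext fun L => ?_)
    have hu := charFunDual_map_inner_stdGaussian (fun i : I => u i) L
    have hu' := charFunDual_map_inner_stdGaussian (fun i : I => u' i) L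
    rw [charFun_stdGaussian] at hu hu'
    rw [norm_sum_smul_eq_of_inner_eq fun i j : I => h i j] at hu
    exact hu.trans hu'.symm
  have hlim := isProjectiveLimit_map (P := stdGaussian H) (X := fun i x => ⟪u i, x⟫)
    (measurable_pi_lambda _ fun _ => by fun_prop).aemeasurable
  simp_rw [finite_marginal] at hlim
  exact hlim.unique (isProjectiveLimit_map
    (measurable_pi_lambda _ fun _ => by fun_prop).aemeasurable)

/-- The mean of the positive part of a standard Gaussian variable. -/
noncomputable def gaussianMeanPos : ℝ≥0∞ :=
  ∫⁻ x, ENNReal.ofReal x ∂(gaussianReal 0 1)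

lemma gaussianMeanPos_ne_top : gaussianMeanPos ≠ ∞ :=
  (IsGaussian.integrable_id (μ := gaussianReal 0 1)).lintegral_lt_top.ne

lemma gaussianMeanPos_ne_zero : gaussianMeanPos ≠ 0 := by
  intro h
  rw [gaussianMeanPos, lintegral_eq_zero_iff (by fun_prop)] at h
  have hvol := (gaussianReal_absolutelyContinuous' 0 one_ne_zero).ae_le h
  have hIoi : volume (Set.Ioi (0 : ℝ)) = 0 :=
    measure_mono_null (fun x hx => by simpa using hx) (ae_iff.1 hvol)
  simp at hIoi

lemma lintegral_inner_stdGaussian {v : H} (hv : ‖v‖ = 1) :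
    ∫⁻ x, ENNReal.ofReal ⟪v, x⟫ ∂(stdGaussian H) = gaussianMeanPos := by
  have hlaw : (stdGaussian H).map (innerSL ℝ v) = gaussianReal 0 1 := by
    rw [IsGaussian.map_eq_gaussianReal, integral_strongDual_stdGaussian,
      variance_dual_stdGaussian, innerSL_apply_norm, hv, one_pow, Real.toNNReal_one]
  rw [gaussianMeanPos, ← hlaw, lintegral_map (by fun_prop) (by fun_prop)]
  simp only [innerSL_apply_apply]

end Gaussian

section GapLength

variable {ι κ : Type*}

/-- The length of the interval of all `s` with `z (inr j) < s ≤ z (inl i)` for all `i` and `j`. -/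
noncomputable def gapLength (z : ι ⊕ κ → ℝ) : ℝ≥0∞ :=
  volume {s : ℝ | (∀ i, s ≤ z (.inl i)) ∧ ∀ j, z (.inr j) < s}

lemma measurable_gapLength [Countable ι] [Countable κ] :
    Measurable (gapLength : (ι ⊕ κ → ℝ) → ℝ≥0∞) := by
  have h : MeasurableSet {q : (ι ⊕ κ → ℝ) × ℝ |
      (∀ i, q.2 ≤ q.1 (.inl i)) ∧ ∀ j, q.1 (.inr j) < q.2} := by
    measurability
  exact measurable_measure_prodMk_left h

lemma gapLength_sub_const (z : ι ⊕ κ → ℝ) (c : ℝ) :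
    gapLength (fun k => z k - c) = gapLength z := by
  rw [gapLength, gapLength, ← measure_preimage_add_right volume c
    {s : ℝ | (∀ i, s ≤ z (.inl i)) ∧ ∀ j, z (.inr j) < s}]
  congr 1
  ext s
  simp [le_sub_iff_add_le, sub_lt_iff_lt_add]

lemma gapLength_const [Nonempty ι] [Nonempty κ] (x y : ℝ) :
    gapLength (Sum.elim (fun _ : ι => x) fun _ : κ => y) = ENNReal.ofReal (x - y) := by
  rw [gapLength, ← Real.volume_Ioc]
  congr 1
  ext s
  simp [and_comm]

lemma gapLength_zero [Nonempty ι] [Nonempty κ] : gapLength (0 : ι ⊕ κ → ℝ) = 0 := by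
  simpa [Pi.zero_def] using gapLength_const (ι := ι) (κ := κ) 0 0

lemma gapLength_smul [Nonempty ι] [Nonempty κ] {r : ℝ} (hr : 0 ≤ r) (z : ι ⊕ κ → ℝ) :
    gapLength (r • z) = ENNReal.ofReal r * gapLength z := by
  rcases hr.eq_or_lt with rfl | hr
  · simp [gapLength_zero]
  have h := Real.volume_preimage_mul_left (inv_ne_zero hr.ne')
    {s : ℝ | (∀ i, s ≤ z (.inl i)) ∧ ∀ j, z (.inr j) < s}
  rw [inv_inv, abs_of_pos hr] at h
  rw [gapLength, gapLength, ← h]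
  congr 1
  ext s
  simp [inv_mul_le_iff₀ hr, lt_inv_mul_iff₀ hr]

variable {H : Type*} [NormedAddCommGroup H] [InnerProductSpace ℝ H]

lemma gapLength_inner_smul [Nonempty ι] [Nonempty κ] (c : ι ⊕ κ → H) {r : ℝ} (hr : 0 ≤ r) (x : H) :
    gapLength (fun k => ⟪c k, r • x⟫) = ENNReal.ofReal r * gapLength fun k => ⟪c k, x⟫ := by
  simp_rw [real_inner_smul_right]
  exact gapLength_smul hr _

variable [MeasurableSpace H] [BorelSpace H] [Countable ι] [Countable κ]

lemma measurable_gapLength_inner (c : ι ⊕ κ → H) :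
    Measurable fun x => gapLength fun k => ⟪c k, x⟫ :=
  measurable_gapLength.comp (by fun_prop)

lemma lintegral_gapLength_stdGaussian_eq_of_norm_sub_eq [Nonempty κ] [FiniteDimensional ℝ H]
    {H' : Type*} [NormedAddCommGroup H'] [InnerProductSpace ℝ H'] [FiniteDimensional ℝ H']
    [MeasurableSpace H'] [BorelSpace H'] {c : ι ⊕ κ → H} {c' : ι ⊕ κ → H'}
    (hconf : ∀ p q, ‖c p - c q‖ = ‖c' p - c' q‖) :
    ∫⁻ x, gapLength (fun k => ⟪c k, x⟫) ∂(stdGaussian H)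
      = ∫⁻ x, gapLength (fun k => ⟪c' k, x⟫) ∂(stdGaussian H') := by
  obtain ⟨o⟩ : Nonempty (ι ⊕ κ) := inferInstance
  have hlaw := map_inner_stdGaussian_eq_of_inner_eq
    fun i j => inner_sub_sub_eq_of_norm_sub_eq hconf i j o
  have h := congrArg (fun ν => ∫⁻ z, gapLength z ∂ν) hlaw
  rw [lintegral_map measurable_gapLength (measurable_pi_lambda _ fun _ => by fun_prop),
    lintegral_map measurable_gapLength (measurable_pi_lambda _ fun _ => by fun_prop)] at h
  simpa only [inner_sub_left, gapLength_sub_const] using h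

end GapLength

section Shear

variable {X : Type*} [MeasurableSpace X]

/-- The image in `X` of the part of `ρ` lying over `Set.Ioc 0 1`. It is the first factor of `ρ`
whenever `ρ` is a product with Lebesgue measure. -/
noncomputable def unitSlice (ρ : Measure (X × ℝ)) : Measure X :=
  (ρ.restrict (Prod.snd ⁻¹' Set.Ioc 0 1)).map Prod.fst

lemma lintegral_unitSlice (ρ : Measure (X × ℝ)) {f : X → ℝ≥0∞} (hf : Measurable f) :
    ∫⁻ x, f x ∂(unitSlice ρ) = ∫⁻ p, (Set.Ioc 0 1).indicator 1 p.2 * f p.1 ∂ρ := by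
  rw [unitSlice, lintegral_map hf measurable_fst,
    ← lintegral_indicator (measurable_snd measurableSet_Ioc)]
  refine lintegral_congr fun p => ?_
  by_cases hp : p.2 ∈ Set.Ioc (0 : ℝ) 1 <;> simp [Set.indicator, hp]

lemma ae_unitSlice {ρ : Measure (X × ℝ)} {s : Set X} (hs : MeasurableSet s)
    (h : ∀ᵐ p ∂ρ, p.1 ∈ s) : ∀ᵐ x ∂(unitSlice ρ), x ∈ s :=
  (ae_map_iff measurable_fst.aemeasurable hs).2 (ae_restrict_of_ae h)

lemma lintegral_comp_add_mul {g : ℝ → ℝ≥0∞} (hg : Measurable g) (t : ℝ) {c : ℝ} (hc : c ≠ 0) :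
    ∫⁻ s, ENNReal.ofReal |c| * g (t + s * c) = ∫⁻ s, g s := by
  calc ∫⁻ s, ENNReal.ofReal |c| * g (t + s * c)
      = ∫⁻ s, g (t + s) ∂(ENNReal.ofReal |c| • volume.map (· * c)) := by
        rw [lintegral_const_mul _ (by fun_prop), lintegral_smul_measure, smul_eq_mul,
          lintegral_map (by fun_prop) (by fun_prop)]
    _ = ∫⁻ s, g s := by rw [Real.smul_map_volume_mul_right hc, lintegral_add_left_eq_self]

variable {ρ : Measure (X × ℝ)} [SFinite ρ] {g : X → ℝ}

/- Smear `f` along the orbits of the shear against the indicator of the unit interval, and move the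
shear from the indicator to `f` by invariance. -/
lemma lintegral_eq_lintegral_unitSlice (hg : Measurable g)
    (hρ : ∀ s : ℝ, ρ.map (fun p => (p.1, p.2 + s * g p.1)) = ρ) {f : X × ℝ → ℝ≥0∞}
    (hf : Measurable f) (hf_zero : ∀ p, g p.1 = 0 → f p = 0) :
    ∫⁻ p, f p ∂ρ = ∫⁻ x, ∫⁻ t, f (x, t) ∂volume ∂(unitSlice ρ) := by
  let φ : ℝ → ℝ≥0∞ := (Set.Ioc 0 1).indicator 1
  have hφ : Measurable φ := measurable_one.indicator measurableSet_Ioc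
  have hφ_lintegral : ∫⁻ s, φ s = 1 := by simp [φ]
  calc ∫⁻ p, f p ∂ρ
      = ∫⁻ p, (∫⁻ s : ℝ, f p * (ENNReal.ofReal |-g p.1| * φ (p.2 + s * -g p.1))) ∂ρ := by
        refine lintegral_congr fun p => ?_
        rw [lintegral_const_mul _ (by fun_prop)]
        rcases eq_or_ne (g p.1) 0 with h | h
        · rw [hf_zero p h, zero_mul]
        · rw [lintegral_comp_add_mul hφ p.2 (neg_ne_zero.2 h), hφ_lintegral, mul_one]
    _ = ∫⁻ s : ℝ, ∫⁻ p, f p * (ENNReal.ofReal |-g p.1| * φ (p.2 + s * -g p.1)) ∂ρ :=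
        lintegral_lintegral_swap (Measurable.aemeasurable (by fun_prop))
    _ = ∫⁻ s : ℝ, ∫⁻ p, φ p.2 * (ENNReal.ofReal |g p.1| * f (p.1, p.2 + s * g p.1)) ∂ρ := by
        refine lintegral_congr fun s => ?_
        conv_lhs => rw [← hρ s]
        rw [lintegral_map (by fun_prop) (by fun_prop)]
        refine lintegral_congr fun p => ?_
        simp only [abs_neg, mul_neg, add_neg_cancel_right]
        ring
    _ = ∫⁻ p, (∫⁻ s : ℝ, φ p.2 * (ENNReal.ofReal |g p.1| * f (p.1, p.2 + s * g p.1))) ∂ρ :=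
        lintegral_lintegral_swap (Measurable.aemeasurable (by fun_prop))
    _ = ∫⁻ p, φ p.2 * (∫⁻ t, f (p.1, t)) ∂ρ := by
        refine lintegral_congr fun p => ?_
        rw [lintegral_const_mul _ (by fun_prop)]
        rcases eq_or_ne (g p.1) 0 with h | h
        · simp [fun t => hf_zero (p.1, t) h]
        · rw [lintegral_comp_add_mul (g := fun t => f (p.1, t)) (by fun_prop) p.2 h]
    _ = ∫⁻ x, ∫⁻ t, f (x, t) ∂volume ∂(unitSlice ρ) :=
        (lintegral_unitSlice ρ hf.lintegral_prod_right').symm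

instance : SFinite (unitSlice ρ) :=
  inferInstanceAs (SFinite (Measure.map _ _))

lemma restrict_eq_restrict_unitSlice_prod (hg : Measurable g)
    (hρ : ∀ s : ℝ, ρ.map (fun p => (p.1, p.2 + s * g p.1)) = ρ) :
    ρ.restrict {p | g p.1 ≠ 0} = ((unitSlice ρ).prod volume).restrict {p | g p.1 ≠ 0} := by
  have hS : MeasurableSet {p : X × ℝ | g p.1 ≠ 0} :=
    (measurableSet_eq_fun (by fun_prop) measurable_const).compl
  refine Measure.ext_of_lintegral _ fun f hf => ?_
  rw [← lintegral_indicator hS, ← lintegral_indicator hS,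
    lintegral_eq_lintegral_unitSlice hg hρ (hf.indicator hS)
      fun p hp => Set.indicator_of_notMem (not_not.2 hp) f,
    lintegral_prod _ (hf.indicator hS).aemeasurable]

end Shear

section MotionInvariance

variable {H : Type*} [NormedAddCommGroup H] [InnerProductSpace ℝ H]

lemma exists_norm_le_mul_abs_inner {ι : Type*} [Fintype ι] (e : OrthonormalBasis ι ℝ H) {x : H}
    (hx : x ≠ 0) : ∃ i, ‖x‖ ≤ √(Fintype.card ι) * |⟪e i, x⟫| := by
  have : Nonempty ι := not_isEmpty_iff.1 fun _ => hx (e.toBasis.ext_elem isEmptyElim)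
  obtain ⟨i, hi⟩ := exists_eq_ciSup_of_finite (f := fun i => ‖⟪e i, x⟫‖)
  exact ⟨i, (e.norm_le_card_mul_iSup_norm_inner x).trans_eq (by rw [← hi, Real.norm_eq_abs])⟩

variable [MeasurableSpace H]

/-- The properties of an invariant measure on half-spaces, read in the coordinates `(ξ, t)` of the
half-space `{u | t ≤ ⟪u, ξ⟫}`. -/
structure IsMotionInvariant (ρ : Measure (H × ℝ)) : Prop where
  norm_eq_one : ∀ᵐ p ∂ρ, ‖p.1‖ = 1
  map_translate : ∀ x : H, ρ.map (fun p => (p.1, p.2 + ⟪x, p.1⟫)) = ρ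
  map_rotate : ∀ R : H ≃ₗᵢ[ℝ] H, ρ.map (fun p => (R p.1, p.2)) = ρ
  separating : ∀ v w : H, ρ {p | p.2 ≤ ⟪v, p.1⟫ ∧ ⟪w, p.1⟫ < p.2} = ENNReal.ofReal ‖v - w‖

/-- The coordinates `(ξ, t)` of the half-spaces that contain every `c (inl i)` and no
`c (inr j)`. -/
def separatingCoords {ι κ : Type*} (c : ι ⊕ κ → H) : Set (H × ℝ) :=
  {p | (∀ i, p.2 ≤ ⟪c (.inl i), p.1⟫) ∧ ∀ j, ⟪c (.inr j), p.1⟫ < p.2}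

lemma measurableSet_separatingCoords [OpensMeasurableSpace H] {ι κ : Type*} [Countable ι]
    [Countable κ] (c : ι ⊕ κ → H) : MeasurableSet (separatingCoords c) := by
  have hle (i : ι) : MeasurableSet {p : H × ℝ | p.2 ≤ ⟪c (.inl i), p.1⟫} :=
    measurableSet_le (by fun_prop) (by fun_prop)
  have hlt (j : κ) : MeasurableSet {p : H × ℝ | ⟪c (.inr j), p.1⟫ < p.2} :=
    measurableSet_lt (by fun_prop) (by fun_prop)
  convert (MeasurableSet.iInter hle).inter (MeasurableSet.iInter hlt)
  ext p
  simp [separatingCoords]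

namespace IsMotionInvariant

variable {ρ : Measure (H × ℝ)}

lemma measure_separatingCoords_le (hρ : IsMotionInvariant ρ) {ι κ : Type*} (c : ι ⊕ κ → H) (i : ι)
    (j : κ) : ρ (separatingCoords c) ≤ ENNReal.ofReal ‖c (.inl i) - c (.inr j)‖ := by
  rw [← hρ.separating]
  exact measure_mono fun p hp => ⟨hp.1 i, hp.2 j⟩

lemma measure_abs_snd_lt_top [FiniteDimensional ℝ H] (hρ : IsMotionInvariant ρ) (r : ℝ) :
    ρ {p | |p.2| < r} < ∞ := by
  let e := stdOrthonormalBasis ℝ H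
  let d := √(Fintype.card (Fin (Module.finrank ℝ H)))
  let slab (v : H) : Set (H × ℝ) := {p | p.2 ≤ ⟪v, p.1⟫ ∧ ⟪-v, p.1⟫ < p.2}
  have slab_lt_top (v : H) : ρ (slab v) < ∞ := by
    rw [hρ.separating]
    exact ENNReal.ofReal_lt_top
  have hcover : {p : H × ℝ | |p.2| < r} ≤ᵐ[ρ]
      ⋃ k, slab ((r * d) • e k) ∪ slab (-((r * d) • e k)) := by
    filter_upwards [hρ.norm_eq_one] with p hp (hpr : |p.2| < r)
    obtain ⟨k, hk⟩ := exists_norm_le_mul_abs_inner e (norm_ne_zero_iff.1 (hp.trans_ne one_ne_zero))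
    have hr : r ≤ |⟪(r * d) • e k, p.1⟫| := by
      have hr_pos : 0 < r := (abs_nonneg _).trans_lt hpr
      rw [real_inner_smul_left, abs_mul, abs_mul, abs_of_pos hr_pos,
        abs_of_nonneg (Real.sqrt_nonneg _ : 0 ≤ d), mul_assoc]
      exact le_mul_of_one_le_right hr_pos.le (hp.symm.trans_le hk)
    refine Set.mem_iUnion.2 ⟨k, ?_⟩
    obtain ⟨hneg, hpos⟩ := abs_lt.1 hpr
    simp only [slab, Set.mem_union, Set.mem_ofPred_eq, inner_neg_left, neg_neg]
    rcases le_abs.1 hr with h | h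
    · exact .inl ⟨by linarith, by linarith⟩
    · exact .inr ⟨by linarith, by linarith⟩
  calc ρ {p | |p.2| < r} ≤ ρ (⋃ k, slab ((r * d) • e k) ∪ slab (-((r * d) • e k))) :=
        measure_mono_ae hcover
    _ ≤ ∑ k, ρ (slab ((r * d) • e k) ∪ slab (-((r * d) • e k))) :=
        measure_iUnion_fintype_le ρ _
    _ < ∞ := ENNReal.sum_lt_top.2 fun k _ =>
        measure_union_lt_top (slab_lt_top _) (slab_lt_top _)

lemma sigmaFinite [FiniteDimensional ℝ H] (hρ : IsMotionInvariant ρ) : SigmaFinite ρ :=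
  ⟨⟨⟨fun n : ℕ => {p | |p.2| < n}, fun _ => trivial, fun n => hρ.measure_abs_snd_lt_top n,
    Set.eq_univ_of_forall fun p => Set.mem_iUnion.2 (exists_nat_gt |p.2|)⟩⟩⟩

lemma isFiniteMeasure_unitSlice [FiniteDimensional ℝ H] (hρ : IsMotionInvariant ρ) :
    IsFiniteMeasure (unitSlice ρ) := by
  have hsub : (Prod.snd ⁻¹' Set.Ioc 0 1 : Set (H × ℝ)) ⊆ {p | |p.2| < 2} :=
    fun p ⟨(h0 : 0 < p.2), (h1 : p.2 ≤ 1)⟩ =>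
      show |p.2| < 2 from abs_lt.2 ⟨by linarith, by linarith⟩
  have : IsFiniteMeasure (ρ.restrict (Prod.snd ⁻¹' Set.Ioc 0 1)) :=
    isFiniteMeasure_restrict.2 ((measure_mono hsub).trans_lt (hρ.measure_abs_snd_lt_top 2)).ne
  exact inferInstanceAs (IsFiniteMeasure (Measure.map _ _))

variable [BorelSpace H]

lemma isRotationInvariant_unitSlice (hρ : IsMotionInvariant ρ) :
    IsRotationInvariant (unitSlice ρ) := by
  intro R
  have hR : Measurable R := R.continuous.measurable
  refine Measure.ext_of_lintegral _ fun f hf => ?_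
  rw [lintegral_map hf hR, lintegral_unitSlice ρ (f := fun x => f (R x)) (hf.comp hR),
    lintegral_unitSlice ρ hf]
  conv_rhs => rw [← hρ.map_rotate R]
  have hφ : Measurable ((Set.Ioc (0 : ℝ) 1).indicator (1 : ℝ → ℝ≥0∞)) :=
    measurable_one.indicator measurableSet_Ioc
  rw [lintegral_map (by fun_prop) (by fun_prop)]

lemma norm_eq_one_unitSlice (hρ : IsMotionInvariant ρ) : ∀ᵐ ξ ∂(unitSlice ρ), ‖ξ‖ = 1 :=
  ae_unitSlice (measurableSet_eq_fun measurable_norm measurable_const) hρ.norm_eq_one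

variable [FiniteDimensional ℝ H]

lemma eq_unitSlice_prod_volume (hρ : IsMotionInvariant ρ) :
    ρ = (unitSlice ρ).prod volume := by
  have := hρ.sigmaFinite
  let e := stdOrthonormalBasis ℝ H
  have hcover {p : H × ℝ} (hp : ‖p.1‖ = 1) : p ∈ ⋃ k, {p : H × ℝ | ⟪e k, p.1⟫ ≠ 0} := by
    obtain ⟨k, hk⟩ := exists_norm_le_mul_abs_inner e (norm_ne_zero_iff.1 (hp.trans_ne one_ne_zero))
    refine Set.mem_iUnion.2 ⟨k, fun h => ?_⟩
    norm_num [h, hp] at hk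
  calc ρ = ρ.restrict (⋃ k, {p : H × ℝ | ⟪e k, p.1⟫ ≠ 0}) :=
        (Measure.restrict_eq_self_of_ae_mem (hρ.norm_eq_one.mono fun p => hcover)).symm
    _ = ((unitSlice ρ).prod volume).restrict (⋃ k, {p : H × ℝ | ⟪e k, p.1⟫ ≠ 0}) := by
        refine Measure.restrict_iUnion_congr.2 fun k =>
          restrict_eq_restrict_unitSlice_prod (g := fun ξ => ⟪e k, ξ⟫) (by fun_prop) fun s => ?_
        simpa only [real_inner_smul_left] using hρ.map_translate (s • e k)
    _ = (unitSlice ρ).prod volume :=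
        Measure.restrict_eq_self_of_ae_mem ((Measure.quasiMeasurePreserving_fst.ae
          hρ.norm_eq_one_unitSlice).mono fun p => hcover)

variable {ι κ : Type*} [Countable ι] [Countable κ]

lemma measure_separatingCoords (hρ : IsMotionInvariant ρ) (c : ι ⊕ κ → H) :
    ρ (separatingCoords c) = ∫⁻ ξ, gapLength (fun k => ⟪c k, ξ⟫) ∂(unitSlice ρ) := by
  conv_lhs => rw [hρ.eq_unitSlice_prod_volume]
  exact Measure.prod_apply (measurableSet_separatingCoords c)

variable [Nonempty ι] [Nonempty κ]

lemma measure_univ_mul_lintegral_gapLength (hρ : IsMotionInvariant ρ) (c : ι ⊕ κ → H) :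
    unitSlice ρ Set.univ * ∫⁻ x, gapLength (fun k => ⟪c k, x⟫) ∂(stdGaussian H)
      = (∫⁻ x, ENNReal.ofReal ‖x‖ ∂(stdGaussian H)) * ρ (separatingCoords c) := by
  have := hρ.isFiniteMeasure_unitSlice
  rw [hρ.measure_separatingCoords]
  exact isRotationInvariant_stdGaussian.measure_univ_mul_lintegral
    hρ.isRotationInvariant_unitSlice hρ.norm_eq_one_unitSlice (measurable_gapLength_inner c)
    fun r x hr => gapLength_inner_smul c hr x

lemma measure_univ_mul_gaussianMeanPos [Nontrivial H] (hρ : IsMotionInvariant ρ) :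
    unitSlice ρ Set.univ * gaussianMeanPos = ∫⁻ x, ENNReal.ofReal ‖x‖ ∂(stdGaussian H) := by
  obtain ⟨v, hv⟩ := exists_norm_eq H zero_le_one
  let c : Unit ⊕ Unit → H := Sum.elim (fun _ => v) fun _ => 0
  have hgap (x : H) : gapLength (fun k => ⟪c k, x⟫) = ENNReal.ofReal ⟪v, x⟫ := by
    rw [← sub_zero ⟪v, x⟫, ← gapLength_const (ι := Unit) (κ := Unit)]
    congr 1
    ext (_ | _) <;> simp [c]
  have hsep : ρ (separatingCoords c) = 1 := by
    simpa [separatingCoords, c, hv] using hρ.separating v 0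
  have h := hρ.measure_univ_mul_lintegral_gapLength c
  simp_rw [hgap] at h
  rwa [lintegral_inner_stdGaussian hv, hsep, mul_one] at h

lemma unitSlice_ne_zero [Nontrivial H] (hρ : IsMotionInvariant ρ) : unitSlice ρ ≠ 0 := by
  intro h
  obtain ⟨v, hv⟩ := exists_ne (0 : H)
  have hsep := hρ.separating v 0
  rw [hρ.eq_unitSlice_prod_volume, h, Measure.zero_prod, Measure.coe_zero, Pi.zero_apply,
    sub_zero, eq_comm, ENNReal.ofReal_eq_zero] at hsep
  exact hv (norm_le_zero_iff.1 hsep)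

lemma gaussianMeanPos_mul_measure_separatingCoords (hρ : IsMotionInvariant ρ) (c : ι ⊕ κ → H) :
    gaussianMeanPos * ρ (separatingCoords c)
      = ∫⁻ x, gapLength (fun k => ⟪c k, x⟫) ∂(stdGaussian H) := by
  cases subsingleton_or_nontrivial H
  · have hsep : ρ (separatingCoords c) = 0 := by
      simpa [Subsingleton.elim (c _) 0] using
        hρ.measure_separatingCoords_le c (Classical.arbitrary ι) (Classical.arbitrary κ)
    have hgap (x : H) : gapLength (fun k => ⟪c k, x⟫) = 0 := by
      simpa [Subsingleton.elim x 0, Pi.zero_def] using gapLength_zero (ι := ι) (κ := κ)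
    simp [hsep, hgap]
  · have := hρ.isFiniteMeasure_unitSlice
    have hne : unitSlice ρ Set.univ ≠ 0 := Measure.measure_univ_ne_zero.2 hρ.unitSlice_ne_zero
    rw [← ENNReal.mul_right_inj hne (measure_ne_top _ _), ← mul_assoc,
      hρ.measure_univ_mul_gaussianMeanPos, hρ.measure_univ_mul_lintegral_gapLength]

end IsMotionInvariant

end MotionInvariance

namespace HalfSpaces

section Coordinates

variable {H : Type*} [NormedAddCommGroup H] [InnerProductSpace ℝ H]

/-- The half-space with unit normal `ξ` and offset `t`, where `(ξ, t)` is the given pair. -/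
def ofCoord (p : {p : H × ℝ // ‖p.1‖ = 1}) : HalfSpaces H :=
  ⟨{u | p.1.2 ≤ ⟪u, p.1.1⟫}, p.1.1, p.1.2, p.2, rfl⟩

lemma eq_and_le_of_forall_le_inner {ξ η : H} (hξ : ‖ξ‖ = 1) (hη : ‖η‖ = 1) {s t : ℝ}
    (h : ∀ u, s ≤ ⟪u, ξ⟫ → t ≤ ⟪u, η⟫) : ξ = η ∧ t ≤ s := by
  have hξξ : ⟪ξ, ξ⟫ = 1 := (inner_eq_one_iff_of_norm_eq_one hξ hξ).2 rfl
  have hηη : ⟪η, η⟫ = 1 := (inner_eq_one_iff_of_norm_eq_one hη hη).2 rfl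
  have hξη : ξ = η := by
    by_contra hne
    have hc : 0 < 1 - ⟪ξ, η⟫ := sub_pos.2 ((inner_lt_one_iff_real_of_norm_eq_one hξ hη).2 hne)
    let r := (|s * ⟪ξ, η⟫ - t| + 1) / (1 - ⟪ξ, η⟫)
    have hr : r * (1 - ⟪ξ, η⟫) = |s * ⟪ξ, η⟫ - t| + 1 := div_mul_cancel₀ _ hc.ne'
    have hmem : s ≤ ⟪s • ξ + r • (ξ - η), ξ⟫ := by
      rw [inner_add_left, real_inner_smul_left, real_inner_smul_left, inner_sub_left, hξξ,
        real_inner_comm ξ η, hr]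
      linarith [abs_nonneg (s * ⟪ξ, η⟫ - t)]
    have hle := h _ hmem
    rw [inner_add_left, real_inner_smul_left, real_inner_smul_left, inner_sub_left, hηη] at hle
    linarith [le_abs_self (s * ⟪ξ, η⟫ - t)]
  subst hξη
  refine ⟨rfl, ?_⟩
  simpa [real_inner_smul_left, hξ] using h (s • ξ) (by simp [real_inner_smul_left, hξ])

lemma ofCoord_injective :
    Function.Injective (ofCoord : {p : H × ℝ // ‖p.1‖ = 1} → HalfSpaces H) := by
  rintro ⟨⟨ξ, s⟩, hξ⟩ ⟨⟨η, t⟩, hη⟩ h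
  have hiff (u : H) : s ≤ ⟪u, ξ⟫ ↔ t ≤ ⟪u, η⟫ := Set.ext_iff.1 (congrArg Subtype.val h) u
  obtain ⟨rfl, hts⟩ := eq_and_le_of_forall_le_inner hξ hη fun u => (hiff u).1
  obtain ⟨-, hst⟩ := eq_and_le_of_forall_le_inner hη hξ fun u => (hiff u).2
  rw [Subtype.mk.injEq, hst.antisymm hts]

lemma ofCoord_surjective :
    Function.Surjective (ofCoord : {p : H × ℝ // ‖p.1‖ = 1} → HalfSpaces H) :=
  fun ⟨_, ξ, t, hξ, hM⟩ => ⟨⟨(ξ, t), hξ⟩, Subtype.ext hM.symm⟩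

/-- Half-spaces are parametrized bijectively by unit normal and offset. -/
noncomputable def coordEquiv : {p : H × ℝ // ‖p.1‖ = 1} ≃ HalfSpaces H :=
  .ofBijective ofCoord ⟨ofCoord_injective, ofCoord_surjective⟩

/-- The pair `(ξ, t)` of the unit normal and the offset of a half-space. -/
noncomputable def coord (M : HalfSpaces H) : H × ℝ :=
  (coordEquiv.symm M).1

lemma norm_coord (M : HalfSpaces H) : ‖M.coord.1‖ = 1 :=
  (coordEquiv.symm M).2

lemma coord_ofCoord (p : {p : H × ℝ // ‖p.1‖ = 1}) : (ofCoord p).coord = p.1 :=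
  congrArg Subtype.val (coordEquiv.symm_apply_apply p)

lemma mem_iff {M : HalfSpaces H} {u : H} : u ∈ M.1 ↔ M.coord.2 ≤ ⟪u, M.coord.1⟫ := by
  obtain ⟨p, rfl⟩ := ofCoord_surjective M
  rw [coord_ofCoord]
  rfl

lemma closure_interior_eq (M : HalfSpaces H) : closure (interior M.1) = M.1 := by
  obtain ⟨M, ξ, t, hξ, rfl⟩ := M
  have hclosed : IsClosed {u : H | t ≤ ⟪u, ξ⟫} := isClosed_le (by fun_prop) (by fun_prop)
  have hconvex : Convex ℝ {u : H | t ≤ ⟪u, ξ⟫} :=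
    convex_halfSpace_ge ⟨fun u v => inner_add_left u v ξ, fun r u => real_inner_smul_left u ξ r⟩ t
  have hopen : IsOpen {u : H | t < ⟪u, ξ⟫} := isOpen_lt (by fun_prop) (by fun_prop)
  have hmem : (t + 1) • ξ ∈ {u : H | t < ⟪u, ξ⟫} := by simp [real_inner_smul_left, hξ]
  have hne : (interior {u : H | t ≤ ⟪u, ξ⟫}).Nonempty :=
    ⟨_, interior_maximal (Set.ofPred_subset_ofPred.2 fun _ => le_of_lt) hopen hmem⟩
  rw [hconvex.closure_interior_eq_closure_of_nonempty_interior hne, hclosed.closure_eq]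

lemma subset_of_dense {D : Set H} (hD : Dense D) {M N : HalfSpaces H}
    (h : ∀ u ∈ D, u ∈ M.1 → u ∈ N.1) : M.1 ⊆ N.1 := by
  have hN : IsClosed N.1 := by
    rw [← N.closure_interior_eq]
    exact isClosed_closure
  rw [← M.closure_interior_eq]
  refine closure_minimal ((hD.open_subset_closure_inter isOpen_interior).trans
    (closure_minimal ?_ hN)) hN
  rintro u ⟨huM, huD⟩
  exact h u huD (interior_subset huM)

lemma eq_of_dense {D : Set H} (hD : Dense D) {M N : HalfSpaces H}
    (h : ∀ u ∈ D, u ∈ M.1 ↔ u ∈ N.1) : M = N :=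
  Subtype.ext ((subset_of_dense hD fun u hu => (h u hu).1).antisymm
    (subset_of_dense hD fun u hu => (h u hu).2))

end Coordinates

section Measurability

variable {H : Type*} [NormedAddCommGroup H] [InnerProductSpace ℝ H] [SecondCountableTopology H]
  [mΩ : MeasurableSpace (HalfSpaces H)]

lemma countablySeparated
    (hm : mΩ = MeasurableSpace.generateFrom {A | ∃ v : H, A = {M : HalfSpaces H | v ∈ M.1}}) :
    MeasurableSpace.CountablySeparated (HalfSpaces H) := by
  obtain ⟨D, hD_countable, hD⟩ := TopologicalSpace.exists_countable_dense H
  refine ⟨⟨(fun v : H => {M : HalfSpaces H | v ∈ M.1}) '' D, hD_countable.image _, ?_, ?_⟩⟩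
  · rintro _ ⟨v, -, rfl⟩
    rw [hm]
    exact MeasurableSpace.measurableSet_generateFrom ⟨v, rfl⟩
  · exact fun M _ N _ h => eq_of_dense hD fun u hu => h _ ⟨u, hu, rfl⟩

variable [MeasurableSpace H] [BorelSpace H]

lemma measurable_ofCoord
    (hm : mΩ = MeasurableSpace.generateFrom {A | ∃ v : H, A = {M : HalfSpaces H | v ∈ M.1}}) :
    Measurable (ofCoord : {p : H × ℝ // ‖p.1‖ = 1} → HalfSpaces H) := by
  subst hm
  refine measurable_generateFrom ?_
  rintro _ ⟨v, rfl⟩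
  exact measurableSet_le (f := fun p : {p : H × ℝ // ‖p.1‖ = 1} => p.1.2)
    (g := fun p => ⟪v, p.1.1⟫) (by fun_prop) (by fun_prop)

variable [CompleteSpace H]

/- By the Lusin–Souslin theorem the measurable bijection `ofCoord` has a measurable inverse. -/
lemma measurable_coord
    (hm : mΩ = MeasurableSpace.generateFrom {A | ∃ v : H, A = {M : HalfSpaces H | v ∈ M.1}}) :
    Measurable (coord : HalfSpaces H → H × ℝ) := by
  have := countablySeparated hm
  have hsphere : MeasurableSet {p : H × ℝ | ‖p.1‖ = 1} :=
    measurableSet_eq_fun (by fun_prop) measurable_const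
  have : StandardBorelSpace {p : H × ℝ // ‖p.1‖ = 1} := hsphere.standardBorel
  have hemb := (measurable_ofCoord hm).measurableEmbedding ofCoord_injective
  have hsymm : Measurable (coordEquiv.symm : HalfSpaces H → {p : H × ℝ // ‖p.1‖ = 1}) := by
    intro B hB
    rw [← coordEquiv.image_eq_preimage_symm]
    exact hemb.measurableSet_image.2 hB
  exact measurable_subtype_coe.comp hsymm

variable {μ : Measure (HalfSpaces H)}

lemma map_map_coord (hμ : IsHalfSpaceMeasure H μ) (φ : H ≃ᵢ H) {T : H × ℝ → H × ℝ}
    (hT : Measurable T) (hT_norm : ∀ p, ‖p.1‖ = 1 → ‖(T p).1‖ = 1)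
    (hφ : ∀ p u, (T p).2 ≤ ⟪φ u, (T p).1⟫ ↔ p.2 ≤ ⟪u, p.1⟫) :
    (μ.map coord).map T = μ.map coord := by
  have hc := measurable_coord hμ.1
  have himage (M : HalfSpaces H) : φ '' M.1 = (ofCoord ⟨T M.coord, hT_norm _ M.norm_coord⟩).1 := by
    ext u
    obtain ⟨w, rfl⟩ := φ.surjective u
    rw [φ.injective.mem_set_image, mem_iff, ← hφ]
    rfl
  ext B hB
  rw [Measure.map_apply hT hB, Measure.map_apply hc (hT hB), Measure.map_apply hc hB,
    ← hμ.2.1 φ _ (hc hB)]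
  congr 1
  ext M
  have hval (N : HalfSpaces H) : N.1 ∈ Subtype.val '' (coord ⁻¹' B) ↔ N.coord ∈ B :=
    Subtype.val_injective.mem_set_image
  rw [Set.mem_ofPred_eq, himage]
  refine Iff.symm ((hval _).trans ?_)
  rw [coord_ofCoord]
  rfl

lemma map_coord_separatingCoords (hμ : IsHalfSpaceMeasure H μ) {ι κ : Type*} [Countable ι]
    [Countable κ] (c : ι ⊕ κ → H) :
    μ.map coord (separatingCoords c)
      = μ {M : HalfSpaces H | (∀ i, c (.inl i) ∈ M.1) ∧ ∀ j, c (.inr j) ∉ M.1} := by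
  rw [Measure.map_apply (measurable_coord hμ.1) (measurableSet_separatingCoords c)]
  congr 1
  ext M
  simp [separatingCoords, mem_iff]

lemma isMotionInvariant_map_coord (hμ : IsHalfSpaceMeasure H μ) :
    IsMotionInvariant (μ.map coord) where
  norm_eq_one := (ae_map_iff (measurable_coord hμ.1).aemeasurable
    (measurableSet_eq_fun (by fun_prop) measurable_const)).2 (.of_forall norm_coord)
  map_translate x := map_map_coord hμ (IsometryEquiv.addRight x) (by fun_prop) (fun _ hp => hp)
    fun p u => by simp [inner_add_left]
  map_rotate R := by
    have hR : Measurable R := R.continuous.measurable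
    exact map_map_coord hμ R.toIsometryEquiv (by fun_prop) (fun p hp => by simpa using hp)
      fun p u => by simp
  separating v w := by
    have h := map_coord_separatingCoords hμ (Sum.elim (fun _ : Unit => v) fun _ : Unit => w)
    simp only [separatingCoords, Sum.elim_inl, Sum.elim_inr, forall_const] at h
    rw [h, hμ.2.2]

end Measurability

end HalfSpaces

theorem halfspace_measure_depends_only_on_configuration_general
    {H : Type*} [NormedAddCommGroup H] [InnerProductSpace ℝ H] [FiniteDimensional ℝ H]
    {H' : Type*} [NormedAddCommGroup H'] [InnerProductSpace ℝ H'] [FiniteDimensional ℝ H']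
    [MeasurableSpace (HalfSpaces H)] [MeasurableSpace (HalfSpaces H')]
    {μ : Measure (HalfSpaces H)} {μ' : Measure (HalfSpaces H')}
    (hμ : IsHalfSpaceMeasure H μ) (hμ' : IsHalfSpaceMeasure H' μ')
    {ι κ : Type*} [Countable ι] [Countable κ] [Nonempty ι] [Nonempty κ]
    {c : ι ⊕ κ → H} {c' : ι ⊕ κ → H'} (hconf : ∀ p q, ‖c p - c q‖ = ‖c' p - c' q‖) :
    μ {M : HalfSpaces H | (∀ i, c (.inl i) ∈ M.1) ∧ ∀ j, c (.inr j) ∉ M.1}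
      = μ' {M : HalfSpaces H' | (∀ i, c' (.inl i) ∈ M.1) ∧ ∀ j, c' (.inr j) ∉ M.1} := by
  borelize H
  borelize H'
  have hρ := HalfSpaces.isMotionInvariant_map_coord hμ
  have hρ' := HalfSpaces.isMotionInvariant_map_coord hμ'
  rw [← HalfSpaces.map_coord_separatingCoords hμ, ← HalfSpaces.map_coord_separatingCoords hμ',
    ← ENNReal.mul_right_inj gaussianMeanPos_ne_zero gaussianMeanPos_ne_top,
    hρ.gaussianMeanPos_mul_measure_separatingCoords,
    hρ'.gaussianMeanPos_mul_measure_separatingCoords]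
  exact lintegral_gapLength_stdGaussian_eq_of_norm_sub_eq hconf

/-- The measure of `{M : all v_{x_i} ∈ M, all v_{y_j} ∉ M}` depends only on
the configuration (pairwise distances) of the points; in particular it is independent of
the ambient space and preserved under affine isometries. -/
theorem halfspace_measure_depends_only_on_configuration
    (H : Type*) [NormedAddCommGroup H] [InnerProductSpace ℝ H] [FiniteDimensional ℝ H]
    (H' : Type*) [NormedAddCommGroup H'] [InnerProductSpace ℝ H'] [FiniteDimensional ℝ H']
    [MeasurableSpace (HalfSpaces H)] [MeasurableSpace (HalfSpaces H')]
    (μ : Measure (HalfSpaces H)) (μ' : Measure (HalfSpaces H'))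
    (hμ : IsHalfSpaceMeasure H μ) (hμ' : IsHalfSpaceMeasure H' μ')
    {mm nn : ℕ} (hm : 1 ≤ mm) (hn : 1 ≤ nn)
    (a : Fin mm → H) (b : Fin nn → H) (a' : Fin mm → H') (b' : Fin nn → H')
    (hconf : ∀ p q : Fin mm ⊕ Fin nn,
      ‖Sum.elim a b p - Sum.elim a b q‖ = ‖Sum.elim a' b' p - Sum.elim a' b' q‖) :
    μ {M : HalfSpaces H | (∀ i, a i ∈ M.1) ∧ ∀ j, b j ∉ M.1}
      = μ' {M : HalfSpaces H' | (∀ i, a' i ∈ M.1) ∧ ∀ j, b' j ∉ M.1} := by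
  have : Nonempty (Fin mm) := ⟨⟨0, hm⟩⟩
  have : Nonempty (Fin nn) := ⟨⟨0, hn⟩⟩
  exact halfspace_measure_depends_only_on_configuration_general hμ hμ' hconf
end
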